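/- arXiv:1809.06525 — 2 statements merged into one kernel-verified Lean document; each statement's English description precedes it below -/
import Mathlib

section
/- Under the hypotheses listed in the context, suppose in addition there exist λ̲ > 0 and τ > 0 with λ̲ ≤ λ_k ≤ 1/α_k − τ for all k, there exists γ̲ > 0 with γ_k ≥ γ̲ for all k, and there exists ε ∈ (0, 2β − μγ̲) with γ_k ≤ (2β − ε)/μ for all k. Then for every x* ∈ Ω, B x_k → B x* strongly in H as k → ∞. -/
open RealInnerProductSpace Filter

theorem aux_summable_mul (f g : ℕ → ℝ) (hf0 : ∀ k, 0 ≤ f k) (hg0 : ∀ k, 0 ≤ g k)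
    (hf : Summable f) (hg : Summable g) : Summable (fun k => f k * g k) := by
  refine Summable.of_nonneg_of_le (fun k => mul_nonneg (hf0 k) (hg0 k)) (fun k => ?_)
    (hg.mul_left (∑' i, f i))
  exact mul_le_mul_of_nonneg_right (hf.le_tsum k (fun j _ => hf0 j)) (hg0 k)

theorem aux_fejer (Q D e f : ℕ → ℝ) (hQ : ∀ k, 0 ≤ Q k) (hD : ∀ k, 0 ≤ D k)
    (he : ∀ k, 0 ≤ e k) (hf : ∀ k, 0 ≤ f k) (hes : Summable e) (hfs : Summable f)
    (h : ∀ k, Q (k + 1) + D k ≤ (1 + e k) * Q k + f k) :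
    Tendsto D atTop (nhds 0) := by
  set P : ℕ → ℝ := fun n => ∏ i ∈ Finset.range n, (1 + e i) with hP
  have hP1 : ∀ n, 1 ≤ P n := by
    intro n
    induction n with
    | zero => simp [hP]
    | succ n ih =>
      have : P (n + 1) = P n * (1 + e n) := by simp [hP, Finset.prod_range_succ]
      rw [this]; nlinarith [he n]
  have hPM : ∀ n, P n ≤ Real.exp (∑' i, e i) := by
    intro n
    calc P n ≤ ∏ i ∈ Finset.range n, Real.exp (e i) := by
          apply Finset.prod_le_prod
          · intro i _; linarith [he i]
          · intro i _; linarith [Real.add_one_le_exp (e i)]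
      _ = Real.exp (∑ i ∈ Finset.range n, e i) := by rw [Real.exp_sum]
      _ ≤ _ := Real.exp_le_exp.mpr (hes.sum_le_tsum _ (fun i _ => he i))
  have hstep : ∀ n, Q (n + 1) / P (n + 1) + D n / P (n + 1) ≤ Q n / P n + f n := by
    intro n
    have hs : P (n + 1) = P n * (1 + e n) := by simp [hP, Finset.prod_range_succ]
    have h0 : 0 < P n := by linarith [hP1 n]
    have h1 : 0 < P (n + 1) := by linarith [hP1 (n + 1)]
    rw [← add_div, div_le_iff₀ h1]
    have : Q n / P n * P (n + 1) = (1 + e n) * Q n := by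
      rw [hs]; field_simp
    rw [add_mul, this]
    have : f n ≤ f n * P (n + 1) := by nlinarith [hf n, hP1 (n + 1)]
    linarith [h n]
  have hsum : ∀ n, ∑ i ∈ Finset.range n, D i / P (i + 1) + Q n / P n
      ≤ Q 0 + ∑ i ∈ Finset.range n, f i := by
    intro n
    induction n with
    | zero => simp [hP]
    | succ n ih =>
      rw [Finset.sum_range_succ, Finset.sum_range_succ]
      linarith [hstep n]
  have hnn : ∀ n, 0 ≤ D n / P (n + 1) := fun n => div_nonneg (hD n) (by linarith [hP1 (n + 1)])
  have hsm : Summable (fun n => D n / P (n + 1)) := by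
    refine summable_of_sum_range_le (c := Q 0 + ∑' i, f i) hnn (fun n => ?_)
    have h1 := hsum n
    have h2 := hfs.sum_le_tsum (Finset.range n) (fun i _ => hf i)
    have h3 : 0 ≤ Q n / P n := div_nonneg (hQ n) (by linarith [hP1 n])
    linarith
  have hDs : Summable D := by
    refine Summable.of_nonneg_of_le hD (fun n => ?_) (hsm.mul_left (Real.exp (∑' i, e i)))
    have h1 : 0 < P (n + 1) := by linarith [hP1 (n + 1)]
    calc D n = P (n + 1) * (D n / P (n + 1)) := by field_simp
      _ ≤ _ := mul_le_mul_of_nonneg_right (hPM _) (hnn n)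
  exact hDs.tendsto_atTop_zero

section ops
variable {H : Type*} [NormedAddCommGroup H] [InnerProductSpace ℝ H]

theorem aux_quad (U : H →L[ℝ] H) (hU : ∀ x y : H, ⟪U x, y⟫ = ⟪x, U y⟫) (v w : H) (t : ℝ) :
    ⟪U (v - t • w), v - t • w⟫ = ⟪U v, v⟫ - 2 * t * ⟪U v, w⟫ + t ^ 2 * ⟪U w, w⟫ := by
  have : ⟪U w, v⟫ = ⟪U v, w⟫ := by rw [hU, real_inner_comm]
  simp only [map_sub, map_smul, inner_sub_left, inner_sub_right, inner_smul_left,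
    inner_smul_right, this]
  simp
  ring

theorem aux_lower (U : H →L[ℝ] H) (hU : ∀ x y : H, ⟪U x, y⟫ = ⟪x, U y⟫)
    (hp : ∀ x : H, 0 ≤ ⟪U x, x⟫) (hm : 0 < ‖U‖) (w : H) :
    ‖U w‖ ^ 2 / ‖U‖ ≤ ⟪U w, w⟫ := by
  have h := hp (w - (1 / ‖U‖) • U w)
  rw [aux_quad U hU, real_inner_self_eq_norm_sq] at h
  have h2 : ⟪U (U w), U w⟫ ≤ ‖U‖ * ‖U w‖ ^ 2 := by
    calc _ ≤ ‖U (U w)‖ * ‖U w‖ := real_inner_le_norm _ _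
      _ ≤ (‖U‖ * ‖U w‖) * ‖U w‖ := by gcongr; exact U.le_opNorm _
      _ = _ := by ring
  have h3 : (1 / ‖U‖) ^ 2 * ⟪U (U w), U w⟫ ≤ (1 / ‖U‖) ^ 2 * (‖U‖ * ‖U w‖ ^ 2) := by gcongr
  have h4 : (1 / ‖U‖) ^ 2 * (‖U‖ * ‖U w‖ ^ 2) = ‖U w‖ ^ 2 / ‖U‖ := by field_simp
  have h5 : 2 * (1 / ‖U‖) * ‖U w‖ ^ 2 = 2 * (‖U w‖ ^ 2 / ‖U‖) := by ring
  linarith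

theorem aux_mono (U U' V V' : H →L[ℝ] H) (hU : ∀ x y : H, ⟪U x, y⟫ = ⟪x, U y⟫)
    (hp : ∀ x : H, 0 ≤ ⟪U x, x⟫) (hUV : ∀ x, U (V x) = x) (hUV' : ∀ x, U' (V' x) = x)
    (η : ℝ) (hη : 0 ≤ η) (hm : ∀ z : H, ⟪U z, z⟫ ≤ (1 + η) * ⟪U' z, z⟫) (q : H) :
    ⟪V' q, q⟫ ≤ (1 + η) * ⟪V q, q⟫ := by
  have h := hp (V q - (1 / (1 + η)) • V' q)
  rw [aux_quad U hU, hUV] at h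
  have h2 := hm (V' q)
  rw [hUV'] at h2
  rw [real_inner_comm q (V' q), real_inner_comm q (V q)]
  have hη1 : 0 < 1 + η := by linarith
  have h3 : (1 / (1 + η)) ^ 2 * ⟪U (V' q), V' q⟫ ≤ (1 / (1 + η)) ^ 2 * ((1 + η) * ⟪q, V' q⟫) := by
    gcongr
  have h4 : (1 / (1 + η)) ^ 2 * ((1 + η) * ⟪q, V' q⟫) = ⟪q, V' q⟫ / (1 + η) := by field_simp
  have h5 : 2 * (1 / (1 + η)) * ⟪q, V' q⟫ = 2 * (⟪q, V' q⟫ / (1 + η)) := by ring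
  have h6 : ⟪q, V' q⟫ / (1 + η) ≤ ⟪q, V q⟫ := by linarith
  rw [div_le_iff₀ hη1] at h6
  linarith

theorem aux_pert (V : H →L[ℝ] H) (hV : ∀ x y : H, ⟪V x, y⟫ = ⟪x, V y⟫) (α : ℝ) (hα : 0 < α)
    (h1 : ∀ x, α * ‖V x‖ ^ 2 ≤ ⟪V x, x⟫) (s g : H) :
    ⟪V (s + g), s + g⟫ ≤ (1 + ‖g‖ / α) * ⟪V s, s⟫ + (‖g‖ + ‖g‖ ^ 2 / α) := by
  have e : ⟪V (s + g), s + g⟫ = ⟪V s, s⟫ + 2 * ⟪V s, g⟫ + ⟪V g, g⟫ := by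
    have : ⟪V g, s⟫ = ⟪V s, g⟫ := by rw [hV, real_inner_comm]
    simp only [map_add, inner_add_left, inner_add_right, this]; ring
  have hs : ‖V s‖ ^ 2 ≤ ⟪V s, s⟫ / α := by rw [le_div_iff₀ hα]; linarith [h1 s]
  have c1 : ⟪V s, g⟫ ≤ ‖V s‖ * ‖g‖ := real_inner_le_norm _ _
  have c2 : 2 * (‖V s‖ * ‖g‖) ≤ ‖g‖ * (‖V s‖ ^ 2 + 1) := by
    nlinarith [norm_nonneg g, mul_nonneg (norm_nonneg g) (sq_nonneg (‖V s‖ - 1))]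
  have c3 : ‖g‖ * (‖V s‖ ^ 2 + 1) ≤ ‖g‖ * (⟪V s, s⟫ / α + 1) := by gcongr
  have c4 : ⟪V g, g⟫ ≤ ‖V g‖ * ‖g‖ := real_inner_le_norm _ _
  have c5 : ‖V g‖ ≤ ‖g‖ / α := by
    rw [le_div_iff₀ hα]
    by_contra hc
    push Not at hc
    have hg : 0 < ‖V g‖ := by
      by_contra h0
      have : ‖V g‖ = 0 := le_antisymm (not_lt.mp h0) (norm_nonneg _)
      rw [this] at hc; simp at hc; linarith [norm_nonneg g]
    nlinarith [h1 g]
  have c6 : ‖V g‖ * ‖g‖ ≤ ‖g‖ / α * ‖g‖ := by gcongr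
  rw [e]
  have c7 : ‖g‖ / α * ‖g‖ = ‖g‖ ^ 2 / α := by ring
  have c8 : ‖g‖ * (⟪V s, s⟫ / α + 1) = ‖g‖ / α * ⟪V s, s⟫ + ‖g‖ := by ring
  linarith

theorem aux_scalar (β γ γ0 t m τ κ n q d r : ℝ) (hβ : 0 < β) (hγ0 : 0 < γ0) (hγ : γ0 ≤ γ)
    (ht : 0 < t) (hm : 0 < m) (htm : t ≤ τ / m) (hκ : γ * m / (2 * β) + τ ≤ κ) (hτ : 0 < τ)
    (hn : q ^ 2 / m ≤ n) (hr : - (q * d) ≤ r) :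
    min (γ0 / (2 * β)) t * (2 * β ^ 2) * d ^ 2 ≤ 2 * γ * β * d ^ 2 + 2 * γ * r + κ * n := by
  have hγp : 0 < γ := by linarith
  have hκ0 : 0 < γ * m / (2 * β) + τ := by positivity
  have hn0 : 0 ≤ q ^ 2 / m := by positivity
  have a1 : (γ * m / (2 * β) + τ) * (q ^ 2 / m) ≤ κ * n := by gcongr; linarith
  have a2 : (γ * m / (2 * β) + τ) * (q ^ 2 / m) = γ / (2 * β) * q ^ 2 + τ / m * q ^ 2 := by
    field_simp
  have a3 : t * q ^ 2 ≤ τ / m * q ^ 2 := by gcongr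
  have a4 : γ * -(q * d) ≤ γ * r := by gcongr
  have a5 : γ / (2 * β) * (2 * β * d - q) ^ 2
      = 2 * γ * β * d ^ 2 + 2 * (γ * -(q * d)) + γ / (2 * β) * q ^ 2 := by
    field_simp; ring
  set M := min (γ0 / (2 * β)) t
  have hM0 : 0 ≤ M := le_min (by positivity) ht.le
  have a6 : M * (2 * β * d - q) ^ 2 ≤ γ / (2 * β) * (2 * β * d - q) ^ 2 := by
    gcongr
    exact (min_le_left _ _).trans (by gcongr)
  have a7 : M * q ^ 2 ≤ t * q ^ 2 := by
    gcongr
    exact min_le_right _ _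
  have a8 : M * (2 * β ^ 2 * d ^ 2) ≤ M * ((2 * β * d - q) ^ 2 + q ^ 2) := by
    gcongr
    nlinarith [sq_nonneg (2 * β * d - q - q)]
  nlinarith

end ops

theorem fb_B_strong_convergence
    {H : Type*} [NormedAddCommGroup H] [InnerProductSpace ℝ H] [CompleteSpace H]
    (β : ℝ) (hβ : 0 < β) (B : H → H)
    (hB : ∀ x y : H, ⟪x - y, B x - B y⟫ ≥ β * ‖B x - B y‖ ^ 2)
    (A : H → Set H)
    (hAmono : ∀ x y u v : H, u ∈ A x → v ∈ A y → ⟪x - y, u - v⟫ ≥ 0)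
    (hAmax : ∀ z w : H, (∀ x : H, ∀ u ∈ A x, ⟪x - z, u - w⟫ ≥ 0) → w ∈ A z)
    (hΩ : {z : H | ∃ u ∈ A z, u + B z = 0}.Nonempty)
    (α : ℝ) (hα : 0 < α) (μ : ℝ) (hμ : 0 < μ)
    (U V : ℕ → H →L[ℝ] H)
    (hU : ∀ k, IsSelfAdjoint (U k))
    (hUpos : ∀ k, ∀ x : H, ⟪U k x, x⟫ ≥ α * ‖x‖ ^ 2)
    (hV : ∀ k, IsSelfAdjoint (V k))
    (hVU : ∀ k, (V k).comp (U k) = ContinuousLinearMap.id ℝ H)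
    (hUV : ∀ k, (U k).comp (V k) = ContinuousLinearMap.id ℝ H)
    (hUnorm : ∀ k, ‖U k‖ ≤ μ)
    (η : ℕ → ℝ) (hη0 : ∀ k, 0 ≤ η k) (hηsum : Summable η)
    (hUmono : ∀ k, ∀ z : H, (1 + η k) * ⟪U (k + 1) z, z⟫ ≥ ⟪U k z, z⟫)
    (γ lam αk : ℕ → ℝ)
    (hγ : ∀ k, 0 < γ k ∧ γ k < 2 * β / ‖U k‖)
    (hαk : ∀ k, αk k = 2 * β / (4 * β - γ k * ‖U k‖))
    (hlam : ∀ k, 0 < lam k ∧ lam k < 1 / αk k)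
    (a b : ℕ → H)
    (ha : Summable (fun k => lam k * ‖a k‖))
    (hb : Summable (fun k => lam k * ‖b k‖))
    (J : ℕ → H → H)
    (hJ : ∀ k, ∀ y : H, (1 / γ k) • (V k (y - J k y)) ∈ A (J k y))
    (x : ℕ → H)
    (hx : ∀ k, x (k + 1) =
      x k + lam k • (J k (x k - γ k • U k (B (x k) + b k)) + a k - x k))
    (lamlb τ : ℝ) (hlamlb : 0 < lamlb) (hτ : 0 < τ)
    (hlam' : ∀ k, lamlb ≤ lam k ∧ lam k ≤ 1 / αk k - τ)
    (γlb : ℝ) (hγlb : 0 < γlb) (hγ' : ∀ k, γlb ≤ γ k)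
    (ε : ℝ) (hε : 0 < ε ∧ ε < 2 * β - μ * γlb)
    (hγub : ∀ k, γ k ≤ (2 * β - ε) / μ) :
    ∀ xs ∈ {z : H | ∃ u ∈ A z, u + B z = 0},
      Tendsto (fun k => B (x k)) atTop (nhds (B xs)) := by
  intro xs hxs
  obtain ⟨u, huA, hu⟩ := hxs
  have hu' : u = - B xs := eq_neg_of_add_eq_zero_left hu
  subst hu'
  have symU : ∀ k, ∀ x y : H, ⟪U k x, y⟫ = ⟪x, U k y⟫ := fun k => (hU k).isSymmetric
  have symV : ∀ k, ∀ x y : H, ⟪V k x, y⟫ = ⟪x, V k y⟫ := fun k => (hV k).isSymmetric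
  have UV : ∀ k, ∀ q, U k (V k q) = q := fun k q => by
    simpa using congrArg (fun T : H →L[ℝ] H => T q) (hUV k)
  have VU : ∀ k, ∀ q, V k (U k q) = q := fun k q => by
    simpa using congrArg (fun T : H →L[ℝ] H => T q) (hVU k)
  have posU : ∀ k, ∀ x : H, 0 ≤ ⟪U k x, x⟫ := fun k x =>
    le_trans (by positivity) (hUpos k x)
  have mpos : ∀ k, 0 < ‖U k‖ := by
    intro k
    rcases (norm_nonneg (U k)).eq_or_lt with h | h
    · have := hγ k
      rw [← h] at this; simp at this; linarith
    · exact h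
  have Vlow : ∀ k, ∀ q : H, ‖q‖ ^ 2 / ‖U k‖ ≤ ⟪V k q, q⟫ := by
    intro k q
    have := aux_lower (U k) (symU k) (posU k) (mpos k) (V k q)
    rw [UV, real_inner_comm] at this
    exact this
  have Vup : ∀ k, ∀ q : H, α * ‖V k q‖ ^ 2 ≤ ⟪V k q, q⟫ := by
    intro k q
    have := hUpos k (V k q)
    rw [UV, real_inner_comm] at this
    exact this
  have Vnn : ∀ k, ∀ q : H, 0 ≤ ⟪V k q, q⟫ := fun k q => le_trans (by positivity) (Vup k q)
  have γμ : ∀ k, γ k * μ ≤ 2 * β := by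
    intro k
    have := hγub k
    rw [le_div_iff₀ hμ] at this
    linarith [hε.1]
  -- Lipschitz bound for the resolvents
  have Jlip : ∀ k, ∀ y z : H, ‖J k y - J k z‖ ≤ μ * ‖V k (y - z)‖ := by
    intro k y z
    have h := hAmono _ _ _ _ (hJ k y) (hJ k z)
    rw [← smul_sub, inner_smul_right, ← map_sub] at h
    have hg := (hγ k).1
    have h' : 0 ≤ ⟪J k y - J k z, V k (y - J k y - (z - J k z))⟫ :=
      nonneg_of_mul_nonneg_right h (by positivity)
    have e : y - J k y - (z - J k z) = (y - z) - (J k y - J k z) := by abel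
    rw [e, map_sub, inner_sub_right] at h'
    set p := J k y - J k z
    have h1 := Vlow k p
    rw [real_inner_comm] at h1
    have h2 : ⟪p, V k (y - z)⟫ ≤ ‖p‖ * ‖V k (y - z)‖ := real_inner_le_norm _ _
    have h3 : ‖p‖ ^ 2 / μ ≤ ‖p‖ ^ 2 / ‖U k‖ :=
      div_le_div_of_nonneg_left (by positivity) (mpos k) (hUnorm k)
    have h4 : ‖p‖ ^ 2 / μ ≤ ‖p‖ * ‖V k (y - z)‖ := by linarith
    rw [div_le_iff₀ hμ] at h4
    rcases (norm_nonneg p).eq_or_lt with h0 | h0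
    · rw [← h0]; positivity
    · have : ‖p‖ * ‖p‖ ≤ ‖p‖ * (μ * ‖V k (y - z)‖) := by linarith
      exact le_of_mul_le_mul_left this h0
  let p : ℕ → H := fun k => J k (x k - γ k • U k (B (x k)))
  let s : ℕ → H := fun k => (x k - xs) + lam k • (p k - x k)
  let g : ℕ → H := fun k =>
    lam k • (a k + (J k (x k - γ k • U k (B (x k) + b k)) - p k))
  have hxsg : ∀ k, x (k + 1) - xs = s k + g k := by
    intro k
    rw [hx k]
    simp only [s, g]
    module
  have hgb : ∀ k, ‖g k‖ ≤ lam k * ‖a k‖ + 2 * β * (lam k * ‖b k‖) := by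
    intro k
    have hl := (hlam k).1
    have hg := (hγ k).1
    have h1 := Jlip k (x k - γ k • U k (B (x k) + b k)) (x k - γ k • U k (B (x k)))
    have e : (x k - γ k • U k (B (x k) + b k)) - (x k - γ k • U k (B (x k)))
        = - (γ k • U k (b k)) := by
      rw [map_add]; module
    rw [e, map_neg, map_smul, VU, norm_neg, norm_smul, Real.norm_of_nonneg hg.le] at h1
    have h2 : μ * (γ k * ‖b k‖) ≤ 2 * β * ‖b k‖ := by
      nlinarith [γμ k, norm_nonneg (b k)]
    simp only [g]
    rw [norm_smul, Real.norm_of_nonneg hl.le]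
    calc _ ≤ lam k * (‖a k‖ + 2 * β * ‖b k‖) := by
          gcongr
          refine (norm_add_le _ _).trans ?_
          gcongr
          exact h1.trans h2
      _ = _ := by ring
  have hgs : Summable (fun k => ‖g k‖) :=
    Summable.of_nonneg_of_le (fun k => norm_nonneg _) hgb (ha.add (hb.mul_left (2 * β)))
  set c : ℝ := min (γlb / (2 * β)) (τ / μ) * (2 * β ^ 2) with hc
  have hcpos : 0 < c := by
    have : 0 < min (γlb / (2 * β)) (τ / μ) := lt_min (by positivity) (by positivity)
    positivity
  have main : ∀ k, ⟪V k (s k), s k⟫ + lamlb * c * ‖B (x k) - B xs‖ ^ 2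
      ≤ ⟪V k (x k - xs), x k - xs⟫ := by
    intro k
    have hg := (hγ k).1
    have hl := (hlam k).1
    set q := p k - x k with hq
    set D := B (x k) - B xs with hD
    set X := x k - xs with hX
    have hm := hAmono _ _ _ _ (hJ k (x k - γ k • U k (B (x k)))) huA
    have e1 : (1 / γ k) • (V k (x k - γ k • U k (B (x k)) - p k)) - - B xs
        = (1 / γ k) • (- V k q - γ k • D) := by
      have : x k - γ k • U k (B (x k)) - p k = - q - γ k • U k (B (x k)) := by
        rw [hq]; abel
      rw [this, map_sub, map_neg, map_smul, VU, hD, smul_sub, smul_sub, smul_sub, smul_sub,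
        smul_smul, smul_smul, one_div_mul_cancel hg.ne']
      module
    have hm2 : 0 ≤ ⟪p k - xs, (1 / γ k) • (- V k q - γ k • D)⟫ := by
      rw [← e1]; exact hm
    rw [inner_smul_right] at hm2
    have hm3 : 0 ≤ ⟪p k - xs, - V k q - γ k • D⟫ :=
      nonneg_of_mul_nonneg_right hm2 (by positivity)
    have e2 : p k - xs = X + q := by rw [hX, hq]; abel
    rw [e2, inner_sub_right, inner_neg_right, inner_smul_right, inner_add_left,
      inner_add_left] at hm3
    have hco := hB (x k) xs
    rw [← hX, ← hD] at hco
    have e3 : ⟪V k (s k), s k⟫ = ⟪V k X, X⟫ + 2 * lam k * ⟪X, V k q⟫ + lam k ^ 2 * ⟪q, V k q⟫ := by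
      have : s k = X - (- lam k) • q := by simp [s, hX, hq]
      rw [this, aux_quad (V k) (symV k), symV k X q, symV k q q]; ring
    have hsc := aux_scalar β (γ k) γlb (τ / μ) ‖U k‖ τ (2 - lam k) ⟪q, V k q⟫ ‖q‖ ‖D‖ ⟪q, D⟫
      hβ hγlb (hγ' k) (by positivity) (mpos k)
      (div_le_div_of_nonneg_left hτ.le (mpos k) (hUnorm k))
      (by
        have h1 := (hlam' k).2
        rw [hαk k, one_div_div] at h1
        have : (4 * β - γ k * ‖U k‖) / (2 * β) = 2 - γ k * ‖U k‖ / (2 * β) := by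
          field_simp; ring
        linarith) hτ
      (by have := Vlow k q; rwa [real_inner_comm] at this)
      (by linarith [(abs_le.mp (abs_real_inner_le_norm q D)).1])
    rw [← hc] at hsc
    have hco' : γ k * (β * ‖D‖ ^ 2) ≤ γ k * ⟪X, D⟫ := by gcongr
    have t1 : 2 * ⟪X, V k q⟫ + lam k * ⟪q, V k q⟫ ≤ - (c * ‖D‖ ^ 2) := by
      nlinarith
    have t2 : lam k * (2 * ⟪X, V k q⟫ + lam k * ⟪q, V k q⟫) ≤ lam k * - (c * ‖D‖ ^ 2) := by gcongr
    have t3 : lamlb * (c * ‖D‖ ^ 2) ≤ lam k * (c * ‖D‖ ^ 2) := by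
      gcongr; exact (hlam' k).1
    rw [e3]
    nlinarith
  have hfin := aux_fejer (fun k => ⟪V k (x k - xs), x k - xs⟫)
    (fun k => lamlb * c * ‖B (x k) - B xs‖ ^ 2)
    (fun k => η k + ‖g k‖ / α + η k * (‖g k‖ / α))
    (fun k => (‖g k‖ + ‖g k‖ ^ 2 / α) + η k * (‖g k‖ + ‖g k‖ ^ 2 / α))
    (fun k => Vnn k _) (fun k => by positivity)
    (fun k => by have := hη0 k; positivity) (fun k => by have := hη0 k; positivity)
    (by
      have h1 := hgs.div_const α
      exact (hηsum.add h1).add (aux_summable_mul _ _ hη0 (fun k => by positivity) hηsum h1))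
    (by
      have h1 : Summable (fun k => ‖g k‖ ^ 2) := by
        simpa [sq] using aux_summable_mul _ _ (fun k => norm_nonneg (g k))
          (fun k => norm_nonneg (g k)) hgs hgs
      have h2 := hgs.add (h1.div_const α)
      exact h2.add (aux_summable_mul _ _ hη0 (fun k => by positivity) hηsum h2))
    (by
      intro k
      have h1 := aux_mono (U k) (U (k + 1)) (V k) (V (k + 1)) (symU k) (posU k) (UV k)
        (UV (k + 1)) (η k) (hη0 k) (hUmono k) (x (k + 1) - xs)
      have h2 := aux_pert (V k) (symV k) α hα (Vup k) (s k) (g k)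
      rw [← hxsg k] at h2
      have h3 := main k
      have h0 := hη0 k
      have hG : 0 ≤ ‖g k‖ / α := by positivity
      have hd : 0 ≤ lamlb * c * ‖B (x k) - B xs‖ ^ 2 := by positivity
      set E := lamlb * c * ‖B (x k) - B xs‖ ^ 2
      set Q := ⟪V k (x k - xs), x k - xs⟫
      set S := ⟪V k (s k), s k⟫
      set F := ‖g k‖ + ‖g k‖ ^ 2 / α
      set G := ‖g k‖ / α
      have h4 : (1 + G) * S + F ≤ (1 + G) * (Q - E) + F := by
        have : S ≤ Q - E := by linarith
        gcongr
      have h5 := h1.trans (mul_le_mul_of_nonneg_left (h2.trans h4) (by linarith : 0 ≤ 1 + η k))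
      have h6 : 0 ≤ (η k + G + η k * G) * E := by positivity
      show ⟪V (k + 1) (x (k + 1) - xs), x (k + 1) - xs⟫ + E ≤ _
      linarith)
  rw [tendsto_iff_norm_sub_tendsto_zero]
  have h1 : Tendsto (fun k => ‖B (x k) - B xs‖ ^ 2) atTop (nhds 0) := by
    have := hfin.const_mul (lamlb * c)⁻¹
    rw [mul_zero] at this
    refine this.congr (fun k => ?_)
    field_simp
  have h2 := h1.sqrt
  simpa using h2
end

section
/- Let H be a real Hilbert space, let A : H → Set H be maximal monotone, and let B : H → H be β-cocoercive for some β > 0. Suppose Ω := {z ∈ H | ∃ u ∈ A(z), u + B(z) = 0} is nonempty. Let γ_k ∈ (0, 2β), α_k := 2β/(4β − γ_k), and λ_k ∈ (0, 1/α_k) for each k, and suppose there exist λ̲ > 0, τ > 0, γ̲ > 0, and ε ∈ (0, 2β − γ̲) such that λ̲ ≤ λ_k ≤ 1/α_k − τ and γ̲ ≤ γ_k ≤ 2β − ε for all k. Let a_k, b_k ∈ H with ∑_k λ_k‖a_k‖ < ∞ and ∑_k λ_k‖b_k‖ < ∞. For each k let J_k : H → H satisfy the resolvent property (1/γ_k)·(y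 − J_k y) ∈ A(J_k y) for every y ∈ H, and from x_0 ∈ H define x_{k+1} = x_k + λ_k·(J_k(x_k − γ_k·(B x_k + b_k)) + a_k − x_k). Then there exists p ∈ Ω such that x_k converges weakly to p, i.e., ⟨x_k, y⟩ → ⟨p, y⟩ for every y ∈ H. -/
open RealInnerProductSpace Filter

lemma fb_ultra {H : Type*} [NormedAddCommGroup H] [InnerProductSpace ℝ H] [CompleteSpace H]
    (x : ℕ → H) (M : ℝ) (hM : ∀ k, ‖x k‖ ≤ M) (U : Ultrafilter ℕ) :
    ∃ p : H, ∀ y : H, Tendsto (fun k => ⟪x k, y⟫) U (nhds ⟪p, y⟫) := by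
  let f : ℕ → WeakDual ℝ H := fun k =>
    StrongDual.toWeakDual (InnerProductSpace.toDual ℝ H (x k))
  have hc := WeakDual.isCompact_closedBall (𝕜 := ℝ) (E := H) 0 M
  have hmem : ∀ k, f k ∈ (WeakDual.toStrongDual ⁻¹' Metric.closedBall (0 : StrongDual ℝ H) M) := by
    intro k
    have : ‖InnerProductSpace.toDual ℝ H (x k)‖ ≤ M := by simpa using hM k
    simpa [f] using this
  obtain ⟨φ, -, hφ⟩ := hc.ultrafilter_le_nhds (U.map f) (by
    rw [le_principal_iff]
    exact Filter.mem_map.2 (Filter.univ_mem' hmem))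
  refine ⟨(InnerProductSpace.toDual ℝ H).symm (WeakDual.toStrongDual φ), fun y => ?_⟩
  have h1 : Tendsto f U (nhds φ) := hφ
  have h2 := ((WeakDual.eval_continuous y).tendsto φ).comp h1
  rw [InnerProductSpace.toDual_symm_apply]
  exact h2

lemma fb_ws {H : Type*} [NormedAddCommGroup H] [InnerProductSpace ℝ H]
    (F : Filter ℕ) (u v : ℕ → H) (p w : H) (M : ℝ) (hM : ∀ k, ‖u k‖ ≤ M)
    (hu : ∀ y, Tendsto (fun k => ⟪u k, y⟫) F (nhds ⟪p, y⟫))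
    (hv : Tendsto v F (nhds w)) :
    Tendsto (fun k => ⟪u k, v k⟫) F (nhds ⟪p, w⟫) := by
  have h1 : Tendsto (fun k => ⟪u k, v k - w⟫) F (nhds 0) := by
    have h2 : Tendsto (fun k => M * ‖v k - w‖) F (nhds 0) := by
      simpa using (tendsto_iff_norm_sub_tendsto_zero.1 hv).const_mul M
    refine squeeze_zero_norm (fun k => ?_) h2
    exact (norm_inner_le_norm _ _).trans (mul_le_mul_of_nonneg_right (hM k) (norm_nonneg _))
  have := (hu w).add h1
  simpa [← inner_add_right] using this

lemma fb_fejer (s e : ℕ → ℝ) (hs : ∀ k, 0 ≤ s k) (he : ∀ k, 0 ≤ e k) (hsum : Summable e)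
    (h : ∀ k, s (k+1) ≤ s k + e k) : ∃ l, Tendsto s atTop (nhds l) := by
  have hanti : Antitone (fun k => s k - ∑ i ∈ Finset.range k, e i) := by
    refine antitone_nat_of_succ_le fun k => ?_
    rw [Finset.sum_range_succ]; linarith [h k]
  have hb : BddBelow (Set.range (fun k => s k - ∑ i ∈ Finset.range k, e i)) := by
    refine ⟨- ∑' i, e i, ?_⟩
    rintro _ ⟨k, rfl⟩
    have := hsum.sum_le_tsum (Finset.range k) (fun i _ => he i)
    simp only
    linarith [hs k]
  have h1 := (tendsto_atTop_ciInf hanti hb).add hsum.hasSum.tendsto_sum_nat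
  exact ⟨_, by simpa using h1⟩

lemma fb_step {H : Type*} [NormedAddCommGroup H] [InnerProductSpace ℝ H]
    (β g : ℝ) (hβ : 0 < β) (hg : 0 < g) (d r D : H)
    (h1 : 0 ≤ ⟪d - r, r - g • D⟫) (h2 : β * ‖D‖ ^ 2 ≤ ⟪d, D⟫) :
    ‖r‖ ^ 2 + g * β * ‖D‖ ^ 2 - g * ⟪r, D⟫ ≤ ⟪d, r⟫ ∧
    (4 * β - g) / (2 * β) * ‖r‖ ^ 2 ≤ 2 * ⟪d, r⟫ := by
  have e1 : ⟪d - r, r - g • D⟫ = ⟪d, r⟫ - g * ⟪d, D⟫ - ‖r‖ ^ 2 + g * ⟪r, D⟫ := by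
    simp only [inner_sub_left, inner_sub_right, real_inner_smul_right, real_inner_self_eq_norm_sq]
    ring
  have h3 : ‖r‖ ^ 2 + g * β * ‖D‖ ^ 2 - g * ⟪r, D⟫ ≤ ⟪d, r⟫ := by
    have := mul_le_mul_of_nonneg_left h2 hg.le
    nlinarith
  refine ⟨h3, ?_⟩
  have h4 := real_inner_le_norm r D
  have h5 := mul_le_mul_of_nonneg_left h4 hg.le
  have h6 : (4 * β - g) / (2 * β) * ‖r‖ ^ 2 = 2 * ‖r‖ ^ 2 - 2 * g * (‖r‖ ^ 2 / (4 * β)) := by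
    field_simp; ring
  have h7 : ‖r‖ * ‖D‖ ≤ ‖r‖ ^ 2 / (4 * β) + β * ‖D‖ ^ 2 := by
    have : ‖r‖ ^ 2 / (4 * β) + β * ‖D‖ ^ 2 - ‖r‖ * ‖D‖ = (‖r‖ - 2 * β * ‖D‖) ^ 2 / (4 * β) := by
      field_simp; ring
    have h8 : 0 ≤ (‖r‖ - 2 * β * ‖D‖) ^ 2 / (4 * β) := by positivity
    linarith
  have h9 := mul_le_mul_of_nonneg_left h7 hg.le
  rw [h6]
  nlinarith

lemma fb_nonexp {H : Type*} [NormedAddCommGroup H] [InnerProductSpace ℝ H]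
    (g : ℝ) (hg : 0 < g) (q q' y y' : H)
    (h : 0 ≤ ⟪q' - q, (1 / g) • (y' - q') - (1 / g) • (y - q)⟫) : ‖q' - q‖ ≤ ‖y' - y‖ := by
  have e : (1 / g) • (y' - q') - (1 / g) • (y - q) = (1 / g) • ((y' - y) - (q' - q)) := by
    rw [← smul_sub]; congr 1; abel
  rw [e, real_inner_smul_right, inner_sub_right, real_inner_self_eq_norm_sq] at h
  have h1 : 0 ≤ ⟪q' - q, y' - y⟫ - ‖q' - q‖ ^ 2 := by
    by_contra hc
    push Not at hc
    have : 0 < 1 / g := by positivity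
    nlinarith
  have h2 := real_inner_le_norm (q' - q) (y' - y)
  by_contra hc
  push Not at hc
  nlinarith [norm_nonneg (q' - q), norm_nonneg (y' - y)]

/-- weak convergence of the forward-backward splitting algorithm with
variable step sizes and extended relaxation parameters (identity metric case). -/
theorem forward_backward_variable_stepsize_weak_convergence
    {H : Type*} [NormedAddCommGroup H] [InnerProductSpace ℝ H] [CompleteSpace H]
    (β : ℝ) (hβ : 0 < β)
    (A : H → Set H)
    (hAmono : ∀ x y u v : H, u ∈ A x → v ∈ A y → ⟪x - y, u - v⟫ ≥ 0)
    (hAmax : ∀ z w : H, (∀ x : H, ∀ u ∈ A x, ⟪x - z, u - w⟫ ≥ 0) → w ∈ A z)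
    (B : H → H)
    (hB : ∀ x y : H, ⟪x - y, B x - B y⟫ ≥ β * ‖B x - B y‖ ^ 2)
    (hΩ : {z : H | ∃ u ∈ A z, u + B z = 0}.Nonempty)
    (γ lam αk : ℕ → ℝ)
    (hγ : ∀ k, 0 < γ k ∧ γ k < 2 * β)
    (hαk : ∀ k, αk k = 2 * β / (4 * β - γ k))
    (hlam : ∀ k, 0 < lam k ∧ lam k < 1 / αk k)
    (lamlb τ γlb ε : ℝ)
    (hlamlb : 0 < lamlb) (hτ : 0 < τ) (hγlb : 0 < γlb)
    (hε : 0 < ε ∧ ε < 2 * β - γlb)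
    (hlam' : ∀ k, lamlb ≤ lam k ∧ lam k ≤ 1 / αk k - τ)
    (hγ' : ∀ k, γlb ≤ γ k ∧ γ k ≤ 2 * β - ε)
    (a b : ℕ → H)
    (ha : Summable (fun k => lam k * ‖a k‖))
    (hb : Summable (fun k => lam k * ‖b k‖))
    (J : ℕ → H → H)
    (hJ : ∀ k, ∀ y : H, (1 / γ k) • (y - J k y) ∈ A (J k y))
    (x : ℕ → H)
    (hx : ∀ k, x (k + 1) =
      x k + lam k • (J k (x k - γ k • (B (x k) + b k)) + a k - x k)) :
    ∃ p ∈ {z : H | ∃ u ∈ A z, u + B z = 0},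
      ∀ y : H, Tendsto (fun k => ⟪x k, y⟫) atTop (nhds ⟪p, y⟫) := by
  have hα : ∀ k, 1 / αk k = (4 * β - γ k) / (2 * β) := fun k => by rw [hαk, one_div_div]
  -- main objects
  set q : ℕ → H := fun k => J k (x k - γ k • B (x k)) with hq
  set r : ℕ → H := fun k => x k - q k with hr
  set e : ℕ → ℝ := fun k => lam k * ‖a k‖ + 2 * β * (lam k * ‖b k‖) with he
  have he0 : ∀ k, 0 ≤ e k := fun k => by
    have := (hlam k).1
    simp only [he]; positivity
  have hesum : Summable e := ha.add (hb.mul_left _)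
  have he_lim : Tendsto e atTop (nhds 0) := hesum.tendsto_atTop_zero
  have hqA : ∀ k, (1 / γ k) • r k - B (x k) ∈ A (q k) := by
    intro k
    have h := hJ k (x k - γ k • B (x k))
    have e1 : (1 / γ k) • r k - B (x k) =
        (1 / γ k) • (x k - γ k • B (x k) - J k (x k - γ k • B (x k))) := by
      have hne := (hγ k).1.ne'
      simp only [hr, hq, smul_sub, smul_smul]
      rw [one_div_mul_cancel hne, one_smul]; abel
    rw [e1]; exact h
  -- step
  have hstep : ∀ z, -B z ∈ A z → ∀ k,
      ‖r k‖ ^ 2 + γ k * β * ‖B (x k) - B z‖ ^ 2 - γ k * ⟪r k, B (x k) - B z⟫ ≤ ⟪x k - z, r k⟫ ∧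
      (4 * β - γ k) / (2 * β) * ‖r k‖ ^ 2 ≤ 2 * ⟪x k - z, r k⟫ := by
    intro z hz k
    apply fb_step β (γ k) hβ (hγ k).1 _ _ _ _ (hB (x k) z)
    have h := hAmono _ _ _ _ (hqA k) hz
    have e1 : r k - γ k • (B (x k) - B z) = γ k • ((1 / γ k) • r k - B (x k) - -B z) := by
      have hne := (hγ k).1.ne'
      simp only [smul_sub, smul_neg, smul_smul]
      rw [mul_one_div_cancel hne, one_smul]; abel
    have e2 : x k - z - r k = q k - z := by simp only [hr]; abel
    rw [e1, e2, real_inner_smul_right]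
    exact mul_nonneg (hγ k).1.le h
  have hdec : ∀ z, -B z ∈ A z → ∀ k,
      ‖x k - z - lam k • r k‖ ^ 2 ≤ ‖x k - z‖ ^ 2 - lamlb * τ * ‖r k‖ ^ 2 := by
    intro z hz k
    have h := (hstep z hz k).2
    rw [← hα k] at h
    have hl := (hlam k).1
    have hl2 := hlam' k
    rw [norm_sub_sq_real, real_inner_smul_right, norm_smul, Real.norm_of_nonneg hl.le, mul_pow]
    have h1 := mul_le_mul_of_nonneg_left h hl.le
    have h2 : lamlb * τ ≤ lam k * (1 / αk k - lam k) :=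
      mul_le_mul hl2.1 (by linarith [hl2.2]) hτ.le hl.le
    have h3 := mul_le_mul_of_nonneg_right h2 (sq_nonneg ‖r k‖)
    nlinarith
  have herr : ∀ z, ∀ k, ‖x (k+1) - z‖ ≤ ‖x k - z - lam k • r k‖ + e k := by
    intro z k
    have hl := (hlam k).1
    set q' := J k (x k - γ k • (B (x k) + b k)) with hq'
    have h1 : ‖q' - q k‖ ≤ γ k * ‖b k‖ := by
      have := fb_nonexp (γ k) (hγ k).1 (q k) q' (x k - γ k • B (x k))
        (x k - γ k • (B (x k) + b k)) (hAmono _ _ _ _ (hJ k _) (hJ k _))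
      have e1 : x k - γ k • (B (x k) + b k) - (x k - γ k • B (x k)) = -(γ k • b k) := by
        rw [smul_add]; abel
      rwa [e1, norm_neg, norm_smul, Real.norm_of_nonneg (hγ k).1.le] at this
    have e2 : x (k+1) - z = (x k - z - lam k • r k) + lam k • (a k + (q' - q k)) := by
      rw [hx k, ← hq']; simp only [hr, smul_sub, smul_add]; abel
    rw [e2]
    refine (norm_add_le _ _).trans ?_
    gcongr
    rw [norm_smul, Real.norm_of_nonneg hl.le]
    have h2 : ‖a k + (q' - q k)‖ ≤ ‖a k‖ + 2 * β * ‖b k‖ := by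
      refine (norm_add_le _ _).trans ?_
      have := mul_le_mul_of_nonneg_right (hγ k).2.le (norm_nonneg (b k))
      linarith
    have := mul_le_mul_of_nonneg_left h2 hl.le
    simp only [he]; linarith
  have hfej : ∀ z, -B z ∈ A z → ∃ l, Tendsto (fun k => ‖x k - z‖) atTop (nhds l) := by
    intro z hz
    refine fb_fejer _ e (fun k => norm_nonneg _) he0 hesum fun k => ?_
    have h1 : ‖x k - z - lam k • r k‖ ≤ ‖x k - z‖ := by
      refine le_of_sq_le_sq ?_ (norm_nonneg _)
      have : 0 ≤ lamlb * τ * ‖r k‖ ^ 2 := by positivity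
      linarith [hdec z hz k]
    linarith [herr z k]
  obtain ⟨z, u, hu, huz⟩ := hΩ
  have hz : -B z ∈ A z := by rwa [← eq_neg_of_add_eq_zero_left huz]
  obtain ⟨l, hl⟩ := hfej z hz
  obtain ⟨M, hM⟩ : ∃ M, ∀ k, ‖x k - z‖ ≤ M := by
    obtain ⟨M, hM⟩ := hl.bddAbove_range
    exact ⟨M, fun k => hM ⟨k, rfl⟩⟩
  have hM0 : 0 ≤ M := (norm_nonneg _).trans (hM 0)
  -- residual tends to zero
  have hr0 : Tendsto (fun k => ‖r k‖ ^ 2) atTop (nhds 0) := by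
    have h1 : Tendsto (fun k => (lamlb * τ)⁻¹ * (‖x k - z‖ ^ 2 - ‖x (k+1) - z‖ ^ 2
        + (2 * M * e k + e k ^ 2))) atTop (nhds 0) := by
      have := (((hl.pow 2).sub ((hl.comp (tendsto_add_atTop_nat 1)).pow 2)).add
        ((he_lim.const_mul (2 * M)).add (he_lim.pow 2))).const_mul ((lamlb * τ)⁻¹)
      simpa using this
    refine squeeze_zero (fun k => by positivity) (fun k => ?_) h1
    have hp : 0 < lamlb * τ := by positivity
    rw [le_inv_mul_iff₀ hp]
    have h2 := hdec z hz k
    have h3 := herr z k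
    have h4 : ‖x k - z - lam k • r k‖ ≤ M := by
      refine le_of_sq_le_sq ?_ hM0
      have : 0 ≤ lamlb * τ * ‖r k‖ ^ 2 := by positivity
      have := pow_le_pow_left₀ (norm_nonneg _) (hM k) 2
      linarith
    have h5 := pow_le_pow_left₀ (norm_nonneg _) h3 2
    have h6 := mul_le_mul_of_nonneg_right h4 (he0 k)
    nlinarith
  have hrn : Tendsto (fun k => ‖r k‖) atTop (nhds 0) := by
    have := hr0.sqrt
    simpa [Real.sqrt_sq] using this
  have hrz : Tendsto r atTop (nhds 0) := tendsto_zero_iff_norm_tendsto_zero.2 hrn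
  -- strong convergence of B x
  have hD : ∀ k, ‖B (x k) - B z‖ ≤ M / β := by
    intro k
    have h1 := (hB (x k) z).trans (real_inner_le_norm _ _)
    have h2 := mul_le_mul_of_nonneg_right (hM k) (norm_nonneg (B (x k) - B z))
    rw [le_div_iff₀ hβ]
    by_contra hc
    push Not at hc
    have h3 : 0 < ‖B (x k) - B z‖ := by
      by_contra h0
      have : ‖B (x k) - B z‖ = 0 := le_antisymm (not_lt.1 h0) (norm_nonneg _)
      rw [this] at hc; linarith
    nlinarith
  have hBsq : Tendsto (fun k => ‖B (x k) - B z‖ ^ 2) atTop (nhds 0) := by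
    have h1 : Tendsto (fun k => (γlb * β)⁻¹ * (3 * M * ‖r k‖)) atTop (nhds 0) := by
      simpa using (hrn.const_mul (3 * M)).const_mul ((γlb * β)⁻¹)
    refine squeeze_zero (fun k => by positivity) (fun k => ?_) h1
    rw [le_inv_mul_iff₀ (by positivity)]
    have h2 := (hstep z hz k).1
    have h3 := real_inner_le_norm (x k - z) (r k)
    have h4 := real_inner_le_norm (r k) (B (x k) - B z)
    have h5 := mul_le_mul_of_nonneg_right (hM k) (norm_nonneg (r k))
    have h6 := mul_le_mul_of_nonneg_left (hD k) (norm_nonneg (r k))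
    have h7 : γ k * ⟪r k, B (x k) - B z⟫ ≤ 2 * β * (‖r k‖ * (M / β)) :=
      (mul_le_mul_of_nonneg_left (h4.trans h6) (hγ k).1.le).trans
        (mul_le_mul_of_nonneg_right (hγ k).2.le (by positivity))
    have h8 : 2 * β * (‖r k‖ * (M / β)) = 2 * M * ‖r k‖ := by field_simp
    have h9 : γlb * β * ‖B (x k) - B z‖ ^ 2 ≤ γ k * β * ‖B (x k) - B z‖ ^ 2 := by
      have := (hγ' k).1
      gcongr
    nlinarith [sq_nonneg ‖r k‖]
  have hBx : Tendsto (fun k => B (x k)) atTop (nhds (B z)) := by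
    rw [tendsto_iff_norm_sub_tendsto_zero]
    have := hBsq.sqrt
    simpa [Real.sqrt_sq] using this
  have hrg : Tendsto (fun k => (1 / γ k) • r k) atTop (nhds 0) := by
    have h1 : Tendsto (fun k => (1 / γlb) * ‖r k‖) atTop (nhds 0) := by
      simpa using hrn.const_mul (1 / γlb)
    refine squeeze_zero_norm (fun k => ?_) h1
    have := (hγ k).1
    rw [norm_smul, Real.norm_of_nonneg (by positivity)]
    have := (hγ' k).1
    gcongr
  have hxb : ∀ k, ‖x k‖ ≤ M + ‖z‖ := fun k => by
    have := norm_add_le (x k - z) z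
    rw [sub_add_cancel] at this
    linarith [hM k]
  -- cluster points
  have hclus : ∀ (U : Ultrafilter ℕ), (U : Filter ℕ) ≤ atTop → ∀ p,
      (∀ y : H, Tendsto (fun k => ⟪x k, y⟫) U (nhds ⟪p, y⟫)) → -B p ∈ A p := by
    intro U hU p hp
    have hBp : B z = B p := by
      have hd : Tendsto (fun k => B (x k) - B p) U (nhds (B z - B p)) :=
        (hBx.mono_left hU).sub_const _
      have h1 := fb_ws U (fun k => x k) _ p _ _ hxb hp hd
      have h2 : Tendsto (fun k => ⟪p, B (x k) - B p⟫) U (nhds ⟪p, B z - B p⟫) :=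
        tendsto_const_nhds.inner hd
      have h3 := h1.sub h2
      rw [sub_self] at h3
      have h4 := (hd.norm.pow 2).const_mul β
      have h5 := le_of_tendsto_of_tendsto h4 h3 (Eventually.of_forall fun k => by
        have := hB (x k) p
        rw [inner_sub_left] at this
        exact this)
      have h6 : ‖B z - B p‖ ^ 2 ≤ 0 := by
        by_contra hc
        push Not at hc
        nlinarith
      have h7 : ‖B z - B p‖ = 0 := by
        have := le_antisymm h6 (sq_nonneg _)
        exact pow_eq_zero_iff (two_ne_zero) |>.1 this
      exact sub_eq_zero.1 (norm_eq_zero.1 h7)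
    rw [← hBp]
    apply hAmax
    intro w v hv
    have hs : Tendsto (fun k => v - ((1 / γ k) • r k - B (x k))) U (nhds (v - (0 - B z))) :=
      tendsto_const_nhds.sub ((hrg.mono_left hU).sub (hBx.mono_left hU))
    have h1 := fb_ws U (fun k => x k) _ p _ _ hxb hp hs
    have h2 : Tendsto (fun k => ⟪w + r k, v - ((1 / γ k) • r k - B (x k))⟫) U
        (nhds ⟪w + 0, v - (0 - B z)⟫) :=
      (tendsto_const_nhds.add (hrz.mono_left hU)).inner hs
    have h3 := h2.sub h1
    have h4 := ge_of_tendsto' h3 (b := 0) (fun k => by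
      rw [← inner_sub_left]
      have e1 : w + r k - x k = w - q k := by simp only [hr]; abel
      rw [e1]
      exact hAmono _ _ _ _ hv (hqA k))
    rw [← inner_sub_left, add_zero, zero_sub] at h4
    exact h4
  -- uniqueness
  have huniq : ∀ (U V : Ultrafilter ℕ), (U : Filter ℕ) ≤ atTop → (V : Filter ℕ) ≤ atTop → ∀ p p',
      (∀ y : H, Tendsto (fun k => ⟪x k, y⟫) U (nhds ⟪p, y⟫)) →
      (∀ y : H, Tendsto (fun k => ⟪x k, y⟫) V (nhds ⟪p', y⟫)) → p = p' := by
    intro U V hU hV p p' hp hp'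
    obtain ⟨l1, hl1⟩ := hfej p (hclus U hU p hp)
    obtain ⟨l2, hl2⟩ := hfej p' (hclus V hV p' hp')
    have h1 : Tendsto (fun k => ⟪x k, p - p'⟫) atTop
        (nhds ((l2 ^ 2 - l1 ^ 2 - (‖p'‖ ^ 2 - ‖p‖ ^ 2)) / 2)) := by
      have := (((hl2.pow 2).sub (hl1.pow 2)).sub_const (‖p'‖ ^ 2 - ‖p‖ ^ 2)).div_const 2
      refine this.congr fun k => ?_
      rw [norm_sub_sq_real, norm_sub_sq_real, inner_sub_right]; ring
    have h2 := tendsto_nhds_unique (hp (p - p')) (h1.mono_left hU)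
    have h3 := tendsto_nhds_unique (hp' (p - p')) (h1.mono_left hV)
    have h4 : ⟪p - p', p - p'⟫ = 0 := by rw [inner_sub_left, h2, h3, sub_self]
    exact sub_eq_zero.1 (inner_self_eq_zero.1 h4)
  obtain ⟨p, hp⟩ := fb_ultra x _ hxb (Ultrafilter.of atTop)
  have hU0 : (Ultrafilter.of (atTop : Filter ℕ) : Filter ℕ) ≤ atTop := Ultrafilter.of_le _
  refine ⟨p, ⟨-B p, hclus _ hU0 p hp, neg_add_cancel _⟩, fun y => ?_⟩
  rw [tendsto_iff_ultrafilter]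
  intro V hV
  obtain ⟨p', hp'⟩ := fb_ultra x _ hxb V
  rw [huniq _ V hU0 hV p p' hp hp']
  exact hp' y
end
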